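/- For every edge e ∈ E, there is no linear subspace of the space of real vectors indexed by V ⊔ {1,2,3} ⊔ {ε} that is spanned by at most n vectors, contains the column M(G)(·, e), and, for every vertex v ∈ V, contains some vector C_v whose Euclidean distance to the column M(G)(·, (v,1)) is strictly less than 1/(n+1). -/

import Mathlib

open Matrix

/-- The Frobenius norm of a real matrix: the square root of the sum of squares of entries. -/
noncomputable def frob {α β : Type*} [Fintype α] [Fintype β] (X : Matrix α β ℝ) : ℝ :=
  Real.sqrt (∑ i, ∑ j, X i j ^ 2)

/-- The matrix `M(G)` of the reduction: rows indexed by `V ⊕ {1,2,3} ⊕ {ε}`,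
columns indexed by `(V × {1,2,3}) ⊕ E`. -/
def MG {V : Type*} [Fintype V] [DecidableEq V] (G : SimpleGraph V) [DecidableRel G.Adj]
    (t : ℝ) : Matrix (V ⊕ Fin 3 ⊕ Unit) ((V × Fin 3) ⊕ G.edgeSet) ℝ :=
  fun r c =>
    match r, c with
    | Sum.inl u, Sum.inl (v, _) => if u = v then (1 : ℝ) else 0
    | Sum.inl u, Sum.inr e => if u ∈ (e : Sym2 V) then t ^ 2 else 0
    | Sum.inr (Sum.inl i), Sum.inl (_, j) => if i = j then t ^ 3 else 0
    | Sum.inr (Sum.inl _), Sum.inr _ => t ^ 5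
    | Sum.inr (Sum.inr _), Sum.inl _ => 0
    | Sum.inr (Sum.inr _), Sum.inr _ => t

/-- Each coordinate difference is bounded by the Euclidean distance. -/
theorem abs_sub_lt_of_sqrt_sum_sq_lt {ι : Type*} [Fintype ι] {x y : ι → ℝ} {δ : ℝ}
    (h : Real.sqrt (∑ r, (x r - y r) ^ 2) < δ) (r : ι) : |x r - y r| < δ := by
  refine lt_of_le_of_lt (Real.abs_le_sqrt ?_) h
  exact Finset.single_le_sum (f := fun r => (x r - y r) ^ 2)
    (fun i _ => sq_nonneg _) (Finset.mem_univ r)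

/-- A family of vectors having a strictly diagonally dominant square block of coordinates is
linearly independent. -/
theorem linearIndependent_of_sum_row_lt_diag {ι κ : Type*} [Fintype ι] [DecidableEq ι]
    (g : ι → κ) (f : ι → κ → ℝ)
    (h : ∀ k, ∑ j ∈ Finset.univ.erase k, ‖f k (g j)‖ < ‖f k (g k)‖) :
    LinearIndependent ℝ f := by
  have hdet : (Matrix.of fun i j => f i (g j)).det ≠ 0 :=
    det_ne_zero_of_sum_row_lt_diag h
  exact (Matrix.linearIndependent_rows_of_det_ne_zero hdet).of_comp (LinearMap.funLeft ℝ ℝ g)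

/-- For every edge `e ∈ E`, there is no linear subspace of `ℝ^{V ⊕ {1,2,3} ⊕ {ε}}` that is
spanned by at most `n` vectors, contains the column `M(G)(·, e)`, and, for every vertex `v`,
contains some vector `C_v` at Euclidean distance less than `1/(n+1)` from the column
`M(G)(·, (v,1))`. -/
theorem no_small_subspace_near_columns
    {V : Type*} [Fintype V] [DecidableEq V] (G : SimpleGraph V) [DecidableRel G.Adj]
    (n m : ℕ) (hn : n = Fintype.card V) (hm : m = G.edgeFinset.card)
    (hn1 : 1 ≤ n) (hm1 : 1 ≤ m)
    (t : ℝ) (ht : t = 1 / (4 * (m + n) ^ 3))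
    (e : G.edgeSet) :
    ¬ ∃ (W : Submodule ℝ ((V ⊕ Fin 3 ⊕ Unit) → ℝ))
        (vs : Fin n → ((V ⊕ Fin 3 ⊕ Unit) → ℝ)),
        W = Submodule.span ℝ (Set.range vs) ∧
        (fun r => MG G t r (Sum.inr e)) ∈ W ∧
        ∀ v : V, ∃ C ∈ W,
          Real.sqrt (∑ r, (C r - MG G t r (Sum.inl (v, (0 : Fin 3)))) ^ 2) <
            1 / (n + 1) := by
  rintro ⟨W, vs, rfl, he, hC⟩
  choose C hCW hCd using hC
  have hn0 : (1 : ℝ) ≤ n := by exact_mod_cast hn1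
  have hm0 : (1 : ℝ) ≤ m := by exact_mod_cast hm1
  have htpos : 0 < t := by rw [ht]; positivity
  have hnt : n * t < 1 := by
    rw [ht, mul_one_div, div_lt_one (by positivity)]
    have h1 : (m + n : ℝ) ≤ (m + n) ^ 3 := le_self_pow₀ (by linarith) (by norm_num)
    linarith
  let f : V ⊕ Unit → (V ⊕ Fin 3 ⊕ Unit) → ℝ :=
    Sum.elim C fun _ r => MG G t r (Sum.inr e)
  let g : V ⊕ Unit → V ⊕ Fin 3 ⊕ Unit := Sum.map id Sum.inr
  have hcard : ∀ k : V ⊕ Unit, ((Finset.univ.erase k).card : ℝ) = n := by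
    intro k
    simp [Finset.card_erase_of_mem, hn]
  have hli : LinearIndependent ℝ f := by
    refine linearIndependent_of_sum_row_lt_diag g f ?_
    rintro (v | u)
    · have hoff : ∀ j ∈ Finset.univ.erase (Sum.inl v : V ⊕ Unit),
          ‖f (Sum.inl v) (g j)‖ ≤ 1 / (n + 1) := by
        intro j hj
        have h := abs_sub_lt_of_sqrt_sum_sq_lt (hCd v) (g j)
        have h0 : MG G t (g j) (Sum.inl (v, 0)) = 0 := by
          rcases j with w | w
          · have : w ≠ v := by simpa using hj
            simp [MG, g, this]
          · simp [MG, g]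
        rw [h0, sub_zero] at h
        exact h.le
      have hdiag := abs_sub_lt_of_sqrt_sum_sq_lt (hCd v) (Sum.inl v)
      have h1 : MG G t (Sum.inl v) (Sum.inl (v, 0)) = 1 := by simp [MG]
      rw [h1] at hdiag
      have hsum := Finset.sum_le_card_nsmul _ _ _ hoff
      rw [nsmul_eq_mul, hcard] at hsum
      have hsplit : (n : ℝ) * (1 / (n + 1)) = 1 - 1 / (n + 1) := by field_simp; ring
      have hlow := (abs_lt.mp hdiag).1
      have habs : C v (Sum.inl v) ≤ ‖f (Sum.inl v) (g (Sum.inl v))‖ := le_abs_self _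
      linarith
    · have hoff : ∀ j ∈ Finset.univ.erase (Sum.inr u : V ⊕ Unit),
          ‖f (Sum.inr u) (g j)‖ ≤ t ^ 2 := by
        rintro (w | w) hj
        · simp only [f, g, MG, Sum.elim_inr, Sum.map_inl, id_eq]
          split_ifs <;> simp [sq_nonneg]
        · simp at hj
      have hsum := Finset.sum_le_card_nsmul _ _ _ hoff
      rw [nsmul_eq_mul, hcard] at hsum
      have hdiag : ‖f (Sum.inr u) (g (Sum.inr u))‖ = t := by
        simp [f, g, MG, htpos.le]
      rw [hdiag]
      nlinarith
  have hmem : Set.range f ⊆ Submodule.span ℝ (Set.range vs) := by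
    rintro _ ⟨v | u, rfl⟩
    · exact hCW v
    · exact he
  have hle := (finrank_span_eq_card hli).symm.le.trans
    ((Submodule.finrank_mono (Submodule.span_le.mpr hmem)).trans (finrank_range_le_card vs))
  simp [← hn] at hle
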